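/- arXiv:1911.12432 — 4 statements merged into one kernel-verified Lean document; each statement's English description precedes it below -/
import Mathlib

section
/- Let G=(S,T;E) be a bipartite graph and S₁,S₂ ⊆ S with S₁∪S₂=S, S₁⊄S₂ and S₂⊄S₁, and let Eᵢ denote the set of edges incident to Sᵢ (i=1,2). Construct G'=(S',T';E') from G as follows: order S' so that the nodes of S₁∖S₂, then S₁∩S₂, then S₂∖S₁ appear in this order; insert |S₁∖S₂| new nodes into S' immediately after the last node of S₁ and |S₂∖S₁| new nodes immediately before the first node of S₂; add |S₁∖S₂|+|S₂∖S₁| new nodes to T'; and add to E' the edges of a perfect matching between the newly added S'-nodes and the newly added T'-nodes. Then, with d=|S|, the graph G' has a perfect d-distance matching if and only if there exists M ⊆ E with |M|=|S| such that both M∩E₁ and M∩E₂ are matchings. -/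
open Finset

/-- `M` is a `d`-distance matching of the bipartite graph with left node set `Fin m`
(ordered) and right node set `V`, whose edge set is `E`. -/
def DDM {m : ℕ} {V : Type*} [DecidableEq V] (d : ℕ) (E M : Finset (Fin m × V)) : Prop :=
  M ⊆ E ∧ (∀ e ∈ M, ∀ f ∈ M, e.1 = f.1 → e = f) ∧
    (∀ e ∈ M, ∀ f ∈ M, e.2 = f.2 → e ≠ f → d ≤ Nat.dist e.1.val f.1.val)

/-- A perfect `d`-distance matching covers every node of `S = Fin m`. -/
def PerfectDDM {m : ℕ} {V : Type*} [DecidableEq V] (d : ℕ) (E M : Finset (Fin m × V)) : Prop :=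
  DDM d E M ∧ ∀ i : Fin m, ∃ t, (i, t) ∈ M

/-- A set of edges is a matching if no two of its edges share a node. -/
def IsMatching {α β : Type*} (M : Finset (α × β)) : Prop :=
  ∀ e ∈ M, ∀ f ∈ M, e ≠ f → e.1 ≠ f.1 ∧ e.2 ≠ f.2

/-!
Only the positions of the nodes matter. In `G'` the nodes of `S₁` lie among the first `d = |S|`
positions and those of `S₂` among the last `d`, so two nodes of the same `Sᵢ` are at distance less
than `d`; a node of `S₁ ∖ S₂` and one of `S₂ ∖ S₁` are separated by both groups of new nodes and by
`S₁ ∩ S₂`, which are `d` positions in total. So being a `d`-distance matching at these positions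
means being a matching on each `Sᵢ`. The new nodes are forced to use their private edges, which
constrain nothing else.
-/

/-- `M` is a `d`-distance matching when the left node `s` is put at position `pos s`. Unlike `DDM`,
this does not require the left nodes to be numbered consecutively, so it applies to `G` itself with
the positions its nodes have in `G'`. -/
structure IsSpacedMatching {P V : Type*} (d : ℕ) (pos : P → ℕ) (M : Finset (P × V)) : Prop where
  fst_injOn : Set.InjOn Prod.fst (M : Set (P × V))
  le_dist : ∀ e ∈ M, ∀ f ∈ M, e.2 = f.2 → e ≠ f → d ≤ Nat.dist (pos e.1) (pos f.1)

theorem ddm_iff_subset_and_isSpacedMatching {m : ℕ} {V : Type*} [DecidableEq V] {d : ℕ}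
    {E M : Finset (Fin m × V)} : DDM d E M ↔ M ⊆ E ∧ IsSpacedMatching d Fin.val M :=
  ⟨fun ⟨hsub, hinj, hdist⟩ => ⟨hsub, fun e he f hf => hinj e he f hf, hdist⟩,
    fun ⟨hsub, hinj, hdist⟩ => ⟨hsub, fun _ he _ hf => hinj he hf, hdist⟩⟩

theorem card_eq_card_iff_forall_exists_mem {S T : Type*} [Fintype S] {M : Finset (S × T)}
    (hM : Set.InjOn Prod.fst (M : Set (S × T))) :
    M.card = Fintype.card S ↔ ∀ s, ∃ t, (s, t) ∈ M := by
  classical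
  have hcard : (M.image Prod.fst).card = M.card := card_image_of_injOn hM
  rw [← hcard, card_eq_iff_eq_univ, eq_univ_iff_forall]
  simp

section PaddedEdges

variable {P S T U : Type*} [Fintype P] [DecidableEq P] [Fintype S] [DecidableEq T] [DecidableEq U]

/-- The edge set of `G'` in terms of that of `G`: the left nodes of `G` are placed by `φ` among the
left nodes `P` of `G'`, and each new node `p`, i.e. one outside the range of `φ`, gets the single
edge to the new right node `ψ p`. The values of `ψ` on the range of `φ` are irrelevant. -/
def paddedEdges (φ : S → P) (ψ : P → U) (E : Finset (S × T)) : Finset (P × (T ⊕ U)) :=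
  E.image (fun e => (φ e.1, Sum.inl e.2)) ∪
    (univ.filter (fun p => p ∉ univ.image φ)).image (fun p => (p, Sum.inr (ψ p)))

variable {φ : S → P} {ψ : P → U} {E M : Finset (S × T)}

theorem mk_inl_mem_paddedEdges {p : P} {t : T} :
    (p, Sum.inl t) ∈ paddedEdges φ ψ E ↔ ∃ s, φ s = p ∧ (s, t) ∈ E := by
  simp [paddedEdges, and_comm]

theorem mk_inr_mem_paddedEdges {p : P} {u : U} :
    (p, Sum.inr u) ∈ paddedEdges φ ψ E ↔ p ∉ Set.range φ ∧ ψ p = u := by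
  simp only [paddedEdges, mem_union, mem_image, mem_filter, mem_univ, true_and, Prod.mk.injEq,
    reduceCtorEq, and_false, exists_false, false_or, Sum.inr.injEq, Set.mem_range]
  exact ⟨by rintro ⟨q, hq, rfl, rfl⟩; exact ⟨hq, rfl⟩, fun ⟨hp, hu⟩ => ⟨p, hp, rfl, hu⟩⟩

theorem mk_inl_apply_mem_paddedEdges (hφ : Function.Injective φ) {s : S} {t : T} :
    (φ s, Sum.inl t) ∈ paddedEdges φ ψ E ↔ (s, t) ∈ E := by
  simp [mk_inl_mem_paddedEdges, hφ.eq_iff]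

theorem paddedEdges_subset_paddedEdges_iff (hφ : Function.Injective φ) :
    paddedEdges φ ψ M ⊆ paddedEdges φ ψ E ↔ M ⊆ E := by
  refine ⟨fun h ⟨s, t⟩ hst => ?_, fun h => union_subset_union_left (image_subset_image h)⟩
  rw [← mk_inl_apply_mem_paddedEdges (ψ := ψ) hφ] at hst ⊢
  exact h hst

theorem forall_exists_mem_paddedEdges_iff (hφ : Function.Injective φ) :
    (∀ p, ∃ v, (p, v) ∈ paddedEdges φ ψ M) ↔ ∀ s, ∃ t, (s, t) ∈ M := by
  constructor
  · intro h s
    obtain ⟨t | u, hv⟩ := h (φ s)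
    · exact ⟨t, (mk_inl_apply_mem_paddedEdges hφ).1 hv⟩
    · exact absurd ⟨s, rfl⟩ (mk_inr_mem_paddedEdges.1 hv).1
  · intro h p
    by_cases hp : p ∈ Set.range φ
    · obtain ⟨s, rfl⟩ := hp
      obtain ⟨t, hst⟩ := h s
      exact ⟨Sum.inl t, (mk_inl_apply_mem_paddedEdges hφ).2 hst⟩
    · exact ⟨Sum.inr (ψ p), mk_inr_mem_paddedEdges.2 ⟨hp, rfl⟩⟩

theorem exists_subset_eq_paddedEdges {M' : Finset (P × (T ⊕ U))}
    (hsub : M' ⊆ paddedEdges φ ψ E) (hcover : ∀ p ∉ Set.range φ, ∃ v, (p, v) ∈ M') :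
    ∃ M ⊆ E, M' = paddedEdges φ ψ M := by
  refine ⟨E.filter (fun e => (φ e.1, Sum.inl e.2) ∈ M'), filter_subset _ _, ?_⟩
  ext ⟨p, t | u⟩
  · simp only [mk_inl_mem_paddedEdges, mem_filter]
    constructor
    · intro h
      obtain ⟨s, rfl, hst⟩ := mk_inl_mem_paddedEdges.1 (hsub h)
      exact ⟨s, rfl, hst, h⟩
    · rintro ⟨s, rfl, -, h⟩
      exact h
  · rw [mk_inr_mem_paddedEdges]
    refine ⟨fun h => mk_inr_mem_paddedEdges.1 (hsub h), ?_⟩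
    rintro ⟨hp, rfl⟩
    obtain ⟨t | u, hv⟩ := hcover p hp
    · obtain ⟨s, hs, -⟩ := mk_inl_mem_paddedEdges.1 (hsub hv)
      exact absurd ⟨s, hs⟩ hp
    · rwa [(mk_inr_mem_paddedEdges.1 (hsub hv)).2]

theorem IsSpacedMatching.of_paddedEdges (hφ : Function.Injective φ) {d : ℕ} {pos : P → ℕ}
    (h : IsSpacedMatching d pos (paddedEdges φ ψ M)) : IsSpacedMatching d (pos ∘ φ) M where
  fst_injOn := by
    rintro ⟨s, t⟩ he ⟨s', t'⟩ hf rfl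
    rw [mem_coe, ← mk_inl_apply_mem_paddedEdges (ψ := ψ) hφ] at he hf
    simpa using h.fst_injOn he hf rfl
  le_dist := by
    rintro ⟨s, t⟩ he ⟨s', t'⟩ hf rfl hne
    rw [← mk_inl_apply_mem_paddedEdges (ψ := ψ) hφ] at he hf
    exact h.le_dist _ he _ hf rfl (by simpa [hφ.eq_iff] using hne)

theorem IsSpacedMatching.paddedEdges (hφ : Function.Injective φ) (hψ : (Set.range φ)ᶜ.InjOn ψ)
    {d : ℕ} {pos : P → ℕ} (h : IsSpacedMatching d (pos ∘ φ) M) :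
    IsSpacedMatching d pos (paddedEdges φ ψ M) where
  fst_injOn := by
    rintro ⟨p, t | u⟩ he ⟨q, t' | u'⟩ hf rfl <;>
      simp only [mem_coe, mk_inl_mem_paddedEdges, mk_inr_mem_paddedEdges] at he hf
    · obtain ⟨s, rfl, hst⟩ := he
      obtain ⟨s', hs', hst'⟩ := hf
      obtain rfl := hφ hs'
      simpa using h.fst_injOn hst hst' rfl
    · exact absurd (he.imp fun _ => And.left) hf.1
    · exact absurd (hf.imp fun _ => And.left) he.1
    · rw [← he.2, ← hf.2]
  le_dist := by
    rintro ⟨p, t | u⟩ he ⟨q, t' | u'⟩ hf hv hne <;>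
      simp only [mk_inl_mem_paddedEdges, mk_inr_mem_paddedEdges, Sum.inl.injEq, Sum.inr.injEq,
        reduceCtorEq] at he hf hv
    · subst hv
      obtain ⟨s, rfl, hst⟩ := he
      obtain ⟨s', rfl, hst'⟩ := hf
      exact h.le_dist _ hst _ hst' rfl (by rintro ⟨⟩; exact hne rfl)
    · obtain rfl := hψ he.1 hf.1 (he.2.trans (hv.trans hf.2.symm))
      exact absurd (by rw [hv]) hne

end PaddedEdges

theorem exists_perfectDDM_paddedEdges_iff {S T U : Type*} [Fintype S] [DecidableEq T]
    [DecidableEq U] {m d : ℕ} {φ : S → Fin m} {ψ : Fin m → U} (hφ : Function.Injective φ)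
    (hψ : (Set.range φ)ᶜ.InjOn ψ) {E : Finset (S × T)} :
    (∃ M', PerfectDDM d (paddedEdges φ ψ E) M') ↔
      ∃ M ⊆ E, M.card = Fintype.card S ∧ IsSpacedMatching d (Fin.val ∘ φ) M := by
  simp only [PerfectDDM, ddm_iff_subset_and_isSpacedMatching]
  constructor
  · rintro ⟨M', ⟨hsub, hspaced⟩, hcover⟩
    obtain ⟨M, hME, rfl⟩ := exists_subset_eq_paddedEdges hsub fun p _ => hcover p
    have hM := hspaced.of_paddedEdges hφ
    have hMcover := (forall_exists_mem_paddedEdges_iff hφ).1 hcover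
    exact ⟨M, hME, (card_eq_card_iff_forall_exists_mem hM.fst_injOn).2 hMcover, hM⟩
  · rintro ⟨M, hME, hcard, hM⟩
    have hMcover := (card_eq_card_iff_forall_exists_mem hM.fst_injOn).1 hcard
    exact ⟨paddedEdges φ ψ M,
      ⟨(paddedEdges_subset_paddedEdges_iff hφ).2 hME, hM.paddedEdges hφ hψ⟩,
      (forall_exists_mem_paddedEdges_iff hφ).2 hMcover⟩

theorem isSpacedMatching_iff_forall_dist_lt {P V : Type*} {d : ℕ} (hd : 0 < d) {pos : P → ℕ}
    {M : Finset (P × V)} :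
    IsSpacedMatching d pos M ↔ ∀ e ∈ M, ∀ f ∈ M, Nat.dist (pos e.1) (pos f.1) < d → e ≠ f →
      e.1 ≠ f.1 ∧ e.2 ≠ f.2 := by
  constructor
  · intro h e he f hf hnear hne
    exact ⟨fun heq => hne (h.fst_injOn he hf heq),
      fun heq => hnear.not_ge (h.le_dist e he f hf heq hne)⟩
  · refine fun h => ⟨fun e he f hf heq => ?_, fun e he f hf heq hne => ?_⟩
    · by_contra hne
      exact (h e he f hf (by rwa [heq, Nat.dist_self]) hne).1 heq
    · by_contra! hnear
      exact (h e he f hf hnear hne).2 heq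

section Blocks

variable {S : Type*} [DecidableEq S] {S₁ S₂ : Finset S}

theorem isSpacedMatching_iff_isMatching_filter {T : Type*} {d : ℕ} (hd : 0 < d) {pos : S → ℕ}
    (hpos : ∀ s s', Nat.dist (pos s) (pos s') < d ↔ s ∈ S₁ ∧ s' ∈ S₁ ∨ s ∈ S₂ ∧ s' ∈ S₂)
    {M : Finset (S × T)} :
    IsSpacedMatching d pos M ↔
      IsMatching (M.filter (fun e => e.1 ∈ S₁)) ∧ IsMatching (M.filter (fun e => e.1 ∈ S₂)) := by
  simp only [isSpacedMatching_iff_forall_dist_lt hd, hpos, IsMatching, mem_filter]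
  constructor
  · intro h
    exact ⟨fun e he f hf => h e he.1 f hf.1 (.inl ⟨he.2, hf.2⟩),
      fun e he f hf => h e he.1 f hf.1 (.inr ⟨he.2, hf.2⟩)⟩
  · rintro ⟨h₁, h₂⟩ e he f hf (⟨hes, hfs⟩ | ⟨hes, hfs⟩)
    · exact h₁ e ⟨he, hes⟩ f ⟨hf, hfs⟩
    · exact h₂ e ⟨he, hes⟩ f ⟨hf, hfs⟩

/-- The positions that the nodes of `S = S₁ ∪ S₂` have in `G'`, counted from `0`: blocks of sizes
`a`, `b`, `c` contain `S₁ ∖ S₂`, `S₁ ∩ S₂` and `S₂ ∖ S₁`, with a gap of size `c` after the first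
block and a gap of size `a` after the second. -/
structure IsBlockLayout (S₁ S₂ : Finset S) (a b c : ℕ) (pos : S → ℕ) : Prop where
  mem_or_mem : ∀ s, s ∈ S₁ ∨ s ∈ S₂
  lt_of_mem_sdiff_left : ∀ s ∈ S₁ \ S₂, pos s < a
  mem_Ico_of_mem_inter : ∀ s ∈ S₁ ∩ S₂, pos s ∈ Set.Ico (a + c) (a + c + b)
  le_of_mem_sdiff_right : ∀ s ∈ S₂ \ S₁, a + c + b + a ≤ pos s
  pos_lt : ∀ s, pos s < a + b + c + a + c

namespace IsBlockLayout

variable {a b c : ℕ} {pos : S → ℕ}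

theorem lt_of_mem_left (h : IsBlockLayout S₁ S₂ a b c pos) {s : S} (hs : s ∈ S₁) :
    pos s < a + b + c := by
  by_cases hs₂ : s ∈ S₂
  · have := (h.mem_Ico_of_mem_inter s (mem_inter.2 ⟨hs, hs₂⟩)).2
    lia
  · have := h.lt_of_mem_sdiff_left s (mem_sdiff.2 ⟨hs, hs₂⟩)
    lia

theorem le_of_mem_right (h : IsBlockLayout S₁ S₂ a b c pos) {s : S} (hs : s ∈ S₂) :
    a + c ≤ pos s := by
  by_cases hs₁ : s ∈ S₁
  · exact (h.mem_Ico_of_mem_inter s (mem_inter.2 ⟨hs₁, hs⟩)).1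
  · have := h.le_of_mem_sdiff_right s (mem_sdiff.2 ⟨hs, hs₁⟩)
    lia

theorem le_dist (h : IsBlockLayout S₁ S₂ a b c pos) {s s' : S} (hs : s ∈ S₁ \ S₂)
    (hs' : s' ∈ S₂ \ S₁) : a + b + c ≤ Nat.dist (pos s) (pos s') := by
  have hleft := h.lt_of_mem_sdiff_left s hs
  have hright := h.le_of_mem_sdiff_right s' hs'
  rw [Nat.dist_eq_sub_of_le (by lia)]
  lia

theorem dist_lt_iff (h : IsBlockLayout S₁ S₂ a b c pos) (s s' : S) :
    Nat.dist (pos s) (pos s') < a + b + c ↔ s ∈ S₁ ∧ s' ∈ S₁ ∨ s ∈ S₂ ∧ s' ∈ S₂ := by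
  constructor
  · intro hlt
    have hleft_right : ¬ (s ∈ S₁ \ S₂ ∧ s' ∈ S₂ \ S₁) := fun hss =>
      hlt.not_ge (h.le_dist hss.1 hss.2)
    have hright_left : ¬ (s ∈ S₂ \ S₁ ∧ s' ∈ S₁ \ S₂) := fun hss =>
      hlt.not_ge (Nat.dist_comm (pos s) _ ▸ h.le_dist hss.2 hss.1)
    have hs := h.mem_or_mem s
    have hs' := h.mem_or_mem s'
    simp only [mem_sdiff] at hleft_right hright_left
    tauto
  · rintro (⟨hs, hs'⟩ | ⟨hs, hs'⟩)
    · have := h.lt_of_mem_left hs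
      have := h.lt_of_mem_left hs'
      unfold Nat.dist
      lia
    · have := h.le_of_mem_right hs
      have := h.le_of_mem_right hs'
      have := h.pos_lt s
      have := h.pos_lt s'
      unfold Nat.dist
      lia

end IsBlockLayout

theorem card_sdiff_add_card_inter_add_card_sdiff (S₁ S₂ : Finset S) :
    (S₁ \ S₂).card + (S₁ ∩ S₂).card + (S₂ \ S₁).card = (S₁ ∪ S₂).card := by
  rw [card_sdiff_add_card_inter, add_comm, card_sdiff_add_card, union_comm]

end Blocks

/-- The NP-hardness reduction: the graph `G'` (on the ordered node set `Fin (n + a + c)`,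
obtained from `G` by ordering `S` as `S₁∖S₂`, `S₁∩S₂`, `S₂∖S₁` via `φ`, inserting
`c = |S₂∖S₁|` new nodes right before the first node of `S₂` and `a = |S₁∖S₂|` new nodes
right after the last node of `S₁`, adding `a + c` new nodes to `T`, and adding the edges
of a perfect matching (given by `ψ`) between the new `S`-nodes and the new `T`-nodes)
has a perfect `n`-distance matching (where `n = |S|`) iff there exists `M ⊆ E` with
`|M| = |S|` such that both `M ∩ E₁` and `M ∩ E₂` are matchings, where `Eᵢ` is the set of
edges incident to `Sᵢ`. -/
theorem stmt0 {S T : Type*} [Fintype S] [DecidableEq S] [DecidableEq T]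
    (E : Finset (S × T)) (S₁ S₂ : Finset S)
    (hU : S₁ ∪ S₂ = Finset.univ) (h1 : ¬ S₁ ⊆ S₂) (h2 : ¬ S₂ ⊆ S₁)
    (a b c n : ℕ) (ha : a = (S₁ \ S₂).card) (hb : b = (S₁ ∩ S₂).card)
    (hc : c = (S₂ \ S₁).card) (hn : n = Fintype.card S)
    (φ : S → Fin (n + a + c)) (hφ : Function.Injective φ)
    (hφ1 : ∀ s ∈ S₁ \ S₂, (φ s).val < a)
    (hφ2 : ∀ s ∈ S₁ ∩ S₂, a + c ≤ (φ s).val ∧ (φ s).val < a + c + b)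
    (hφ3 : ∀ s ∈ S₂ \ S₁, a + c + b + a ≤ (φ s).val)
    (ψ : Fin (n + a + c) → Fin (a + c))
    (hψ : ∀ p q : Fin (n + a + c), p ∉ Finset.univ.image φ → q ∉ Finset.univ.image φ →
      ψ p = ψ q → p = q)
    (E' : Finset (Fin (n + a + c) × (T ⊕ Fin (a + c))))
    (hE' : E' = E.image (fun e => (φ e.1, Sum.inl e.2)) ∪
      (Finset.univ.filter (fun p => p ∉ Finset.univ.image φ)).image
        (fun p => (p, Sum.inr (ψ p)))) :
    (∃ M', PerfectDDM n E' M') ↔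
      (∃ M ⊆ E, M.card = n ∧ IsMatching (M.filter (fun e => e.1 ∈ S₁)) ∧
        IsMatching (M.filter (fun e => e.1 ∈ S₂))) := by
  obtain rfl : n = a + b + c := by
    rw [hn, ha, hb, hc, card_sdiff_add_card_inter_add_card_sdiff, hU, card_univ]
  have hlayout : IsBlockLayout S₁ S₂ a b c (Fin.val ∘ φ) :=
    { mem_or_mem := fun s => mem_union.1 (hU ▸ mem_univ s)
      lt_of_mem_sdiff_left := hφ1
      mem_Ico_of_mem_inter := hφ2
      le_of_mem_sdiff_right := hφ3
      pos_lt := fun s => (φ s).isLt }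
  have hn_pos : 0 < a + b + c := by
    obtain ⟨s, -⟩ := not_subset.1 h1
    exact hn ▸ Fintype.card_pos_iff.2 ⟨s⟩
  have hψ_injOn : (Set.range φ)ᶜ.InjOn ψ := fun p hp q hq =>
    hψ p q (by simpa using hp) (by simpa using hq)
  have hE'_eq : E' = paddedEdges φ ψ E := hE'
  rw [hE'_eq, exists_perfectDDM_paddedEdges_iff hφ hψ_injOn, ← hn]
  simp only [isSpacedMatching_iff_isMatching_filter hn_pos hlayout.dist_lt_iff]
end

section
/- With the block construction below, each Mᵢ (i = 1,…,2d−1) is a feasible d-distance matching of the extended cyclic instance, and the maximum-weight one M_{i*} satisfies w(M*) ≤ (2 − 1/d)·w(M_{i*}) for every d-distance matching M* of the instance; equivalently, d·w(M*) ≤ Σ_{i=1}^{2d−1} w(Mᵢ) ≤ (2d−1)·w(M_{i*}). -/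
open Finset

/-- `M` is a cyclic `d`-distance matching: every node of the cyclically ordered set
`Fin N` is incident to at most one edge of `M`, and any two distinct edges at the same
`T`-node have cyclic distance at least `d`. -/
def CyclicDDM {N : ℕ} {T : Type*} [DecidableEq T] (d : ℕ)
    (E M : Finset (Fin N × T)) : Prop :=
  M ⊆ E ∧ (∀ e ∈ M, ∀ f ∈ M, e.1 = f.1 → e = f) ∧
    (∀ e ∈ M, ∀ f ∈ M, e.2 = f.2 → e ≠ f →
      d ≤ min (Nat.dist e.1.val f.1.val) (N - Nat.dist e.1.val f.1.val))

/-- `R_d(p)`: the node `p` together with the next `d − 1` nodes in cyclic order. -/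
def cyclicBlock {N : ℕ} (d : ℕ) (p : Fin N) : Finset (Fin N) :=
  Finset.univ.filter (fun q => (q.val + N - p.val) % N < d)

/-- The edge set of `H_p`, the subgraph induced by `R_d(p) ∪ T`. -/
def blockEdges {N : ℕ} {T : Type*} [DecidableEq T] (d : ℕ)
    (E : Finset (Fin N × T)) (p : Fin N) : Finset (Fin N × T) :=
  E.filter (fun e => e.1 ∈ cyclicBlock d p)

/-!
The edges of a `d`-distance matching `M*` inside one block of `d` consecutive nodes form a matching,
so they weigh at most as much as the optimal matching `F p` of that block. Every node lies in
exactly `d` of the blocks, so summing over all block starts gives `d * w(M*) ≤ ∑ p, w(F p)`.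
Grouping the starts by their residue `i` modulo `2d - 1` turns the right-hand side into
`∑ i, w(M i)`: starts of equal residue are at cyclic distance at least `2d - 1`, which keeps their
blocks disjoint, and nodes of different blocks at cyclic distance at least `d`.
-/

section CyclicOrder

variable {N d : ℕ}

/-- The distance of two nodes of the cyclically ordered set `Fin N`, in the form in which it occurs
in `CyclicDDM`. -/
def cyclicDist (a b : Fin N) : ℕ :=
  min (Nat.dist a.val b.val) (N - Nat.dist a.val b.val)

theorem cyclicDist_self (a : Fin N) : cyclicDist a a = 0 := by
  simp [cyclicDist]

theorem le_cyclicDist_of_modEq {D : ℕ} (hD : D ∣ N) {a b : Fin N} (hab : a ≡ b [MOD D])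
    (hne : a ≠ b) : D ≤ cyclicDist a b := by
  have hdvd : D ∣ Nat.dist a b := dvd_add hab.symm.dvd' hab.dvd'
  have hpos : 0 < Nat.dist a b := Nat.dist_pos_of_ne (Fin.val_ne_of_ne hne)
  have hlt : Nat.dist a b < N := by grind [Nat.dist]
  exact le_min (Nat.le_of_dvd hpos hdvd) (Nat.le_of_dvd (by lia) (Nat.dvd_sub hD hdvd))

theorem mem_cyclicBlock {p q : Fin N} : q ∈ cyclicBlock d p ↔ (q - p).val < d := by
  rw [cyclicBlock, mem_filter_univ, Fin.sub_def, add_comm, Nat.sub_add_comm p.isLt.le]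

theorem val_sub_eq_ite (a b : Fin N) :
    (a - b).val = if b ≤ a then a.val - b.val else N + a.val - b.val := by
  split_ifs with h
  · exact Fin.coe_sub_iff_le.2 h
  · exact Fin.coe_sub_iff_lt.2 (not_le.1 h)

theorem cyclicDist_lt_of_mem_cyclicBlock {p q q' : Fin N} (hq : q ∈ cyclicBlock d p)
    (hq' : q' ∈ cyclicBlock d p) : cyclicDist q q' < d := by
  rw [mem_cyclicBlock, val_sub_eq_ite] at hq hq'
  grind [cyclicDist, Nat.dist]

-- Both nodes lie ahead of their block starts, by at most `d - 1` steps each, so the displacements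
-- partly cancel: the distance drops by at most `d - 1`, not `2 * (d - 1)`.
theorem le_cyclicDist_of_mem_cyclicBlock {c : ℕ} {p p' q q' : Fin N}
    (hp : c + d ≤ cyclicDist p p' + 1) (hq : q ∈ cyclicBlock d p) (hq' : q' ∈ cyclicBlock d p') :
    c ≤ cyclicDist q q' := by
  rw [mem_cyclicBlock, val_sub_eq_ite] at hq hq'
  grind [cyclicDist, Nat.dist]

theorem le_cyclicDist_of_mem_cyclicBlock_of_modEq {c D : ℕ} (hD : D ∣ N) (hc : c + d ≤ D + 1)
    {p p' q q' : Fin N} (hmod : p ≡ p' [MOD D]) (hne : p ≠ p') (hq : q ∈ cyclicBlock d p)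
    (hq' : q' ∈ cyclicBlock d p') : c ≤ cyclicDist q q' :=
  have hstarts : D ≤ cyclicDist p p' := le_cyclicDist_of_modEq hD hmod hne
  le_cyclicDist_of_mem_cyclicBlock (by lia) hq hq'

theorem disjoint_cyclicBlock_of_modEq {D : ℕ} (hD : D ∣ N) (hd : d ≤ D) {p p' : Fin N}
    (hmod : p ≡ p' [MOD D]) (hne : p ≠ p') : Disjoint (cyclicBlock d p) (cyclicBlock d p') := by
  refine disjoint_left.2 fun q hq hq' => Nat.not_succ_le_zero 0 ?_
  calc 1 ≤ cyclicDist q q :=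
        le_cyclicDist_of_mem_cyclicBlock_of_modEq hD (by lia) hmod hne hq hq'
    _ = 0 := cyclicDist_self q

theorem card_filter_mem_cyclicBlock (hd : d ≤ N) (q : Fin N) :
    #{p | q ∈ cyclicBlock d p} = d := by
  have : NeZero N := ⟨q.pos.ne'⟩
  calc #{p | q ∈ cyclicBlock d p} = #{x : Fin N | x.val < d} :=
        card_equiv (Equiv.subLeft q) fun p => by simp [mem_cyclicBlock]
    _ = d := by rw [Fin.card_filter_val_lt, min_eq_right hd]

end CyclicOrder

section BlockEdges

variable {N d : ℕ} {T : Type*} [DecidableEq T] {E M : Finset (Fin N × T)} {p : Fin N}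

theorem mem_blockEdges {e : Fin N × T} :
    e ∈ blockEdges d E p ↔ e ∈ E ∧ e.1 ∈ cyclicBlock d p :=
  mem_filter

theorem blockEdges_mono (h : M ⊆ E) : blockEdges d M p ⊆ blockEdges d E p :=
  filter_subset_filter _ h

theorem disjoint_blockEdges {p' : Fin N} (h : Disjoint (cyclicBlock d p) (cyclicBlock d p')) :
    Disjoint (blockEdges d E p) (blockEdges d E p') :=
  disjoint_filter.2 fun _ _ hp hp' => disjoint_left.1 h hp hp'

theorem CyclicDDM.isMatching_blockEdges (hM : CyclicDDM d E M) (p : Fin N) :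
    IsMatching (blockEdges d M p) := by
  obtain ⟨-, hnode, hdist⟩ := hM
  intro e he f hf hne
  rw [mem_blockEdges] at he hf
  refine ⟨fun h => hne (hnode e he.1 f hf.1 h), fun h => ?_⟩
  exact (hdist e he.1 f hf.1 h hne).not_gt (cyclicDist_lt_of_mem_cyclicBlock he.2 hf.2)

theorem sum_sum_blockEdges {R : Type*} [AddCommMonoid R] (hd : d ≤ N) (M : Finset (Fin N × T))
    (w : Fin N × T → R) : ∑ p, ∑ e ∈ blockEdges d M p, w e = d • ∑ e ∈ M, w e :=
  calc ∑ p, ∑ e ∈ blockEdges d M p, w e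
      = ∑ e ∈ M, ∑ p with e.1 ∈ cyclicBlock d p, w e :=
        sum_comm' fun p e => by simp [mem_blockEdges, and_comm]
    _ = d • ∑ e ∈ M, w e := by
        simp only [sum_const, card_filter_mem_cyclicBlock hd, sum_nsmul]

end BlockEdges

/-- `F` is a matching of maximum weight in the graph with edge set `H`. -/
structure IsMaxWeightMatching {α β R : Type*} [AddCommMonoid R] [LE R] (w : α × β → R)
    (H F : Finset (α × β)) : Prop where
  subset : F ⊆ H
  isMatching : IsMatching F
  sum_le : ∀ F' ⊆ H, IsMatching F' → ∑ e ∈ F', w e ≤ ∑ e ∈ F, w e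

/-- The union of the sets `F p` over the starts `p = i, i + D, i + 2D, …`, once around the cycle
`Fin N`; for `D = 2d - 1` this is the paper's `M_i`. -/
def blockUnion {N : ℕ} [NeZero N] {α : Type*} [DecidableEq α] (D : ℕ) (F : Fin N → Finset α)
    (i : ℕ) : Finset α :=
  (range (N / D)).biUnion fun j => F (Fin.ofNat N (i + j * D))

section BlockUnion

variable {N d D i : ℕ} [NeZero N]

theorem mem_blockUnion {α : Type*} [DecidableEq α] (hD : D ∣ N) (hi : i < D)
    {F : Fin N → Finset α} {a : α} :
    a ∈ blockUnion D F i ↔ ∃ p : Fin N, p.val % D = i ∧ a ∈ F p := by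
  simp only [blockUnion, mem_biUnion, mem_range]
  constructor
  · rintro ⟨j, -, ha⟩
    refine ⟨_, ?_, ha⟩
    rw [Fin.val_ofNat, Nat.mod_mod_of_dvd _ hD, Nat.add_mul_mod_self_right, Nat.mod_eq_of_lt hi]
  · rintro ⟨p, rfl, ha⟩
    refine ⟨p / D, Nat.div_lt_div_of_lt_of_dvd hD p.isLt, ?_⟩
    rwa [Nat.mod_add_div', Fin.ofNat_val_eq_self]

theorem blockUnion_eq_biUnion_filter {α : Type*} [DecidableEq α] (hD : D ∣ N) (hi : i < D)
    (F : Fin N → Finset α) :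
    blockUnion D F i = ({p | p.val % D = i} : Finset (Fin N)).biUnion F := by
  ext a
  simp [mem_blockUnion hD hi]

variable {T : Type*} [DecidableEq T] {E : Finset (Fin N × T)} {F : Fin N → Finset (Fin N × T)}

theorem cyclicDDM_blockUnion (hD : D ∣ N) (hdD : 2 * d - 1 ≤ D) (hi : i < D)
    (hF : ∀ p, F p ⊆ blockEdges d E p) (hmatching : ∀ p, IsMatching (F p)) :
    CyclicDDM d E (blockUnion D F i) := by
  have hnode {p : Fin N} {e : Fin N × T} (he : e ∈ F p) : e.1 ∈ cyclicBlock d p :=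
    (mem_blockEdges.1 (hF p he)).2
  simp only [CyclicDDM, subset_iff, mem_blockUnion hD hi]
  refine ⟨?_, ?_, ?_⟩
  · rintro e ⟨p, -, he⟩
    exact (mem_blockEdges.1 (hF p he)).1
  · rintro e ⟨p, hp, he⟩ f ⟨p', hp', hf⟩ hef
    obtain rfl | hne := eq_or_ne p p'
    · by_contra hne
      exact (hmatching p e he f hf hne).1 hef
    · have hdisj := disjoint_cyclicBlock_of_modEq hD (by lia : d ≤ D) (hp.trans hp'.symm) hne
      exact absurd hef (disjoint_iff_ne.1 hdisj _ (hnode he) _ (hnode hf))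
  · rintro e ⟨p, hp, he⟩ f ⟨p', hp', hf⟩ hef hef'
    obtain rfl | hne := eq_or_ne p p'
    · exact absurd hef (hmatching p e he f hf hef').2
    · exact le_cyclicDist_of_mem_cyclicBlock_of_modEq hD (by lia) (hp.trans hp'.symm) hne
        (hnode he) (hnode hf)

theorem sum_sum_blockUnion {R : Type*} [AddCommMonoid R] (hD : D ∣ N) (hd : d ≤ D)
    (hF : ∀ p, F p ⊆ blockEdges d E p) (w : Fin N × T → R) :
    ∑ i ∈ range D, ∑ e ∈ blockUnion D F i, w e = ∑ p, ∑ e ∈ F p, w e := by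
  have hDpos : 0 < D := Nat.pos_of_dvd_of_pos hD (NeZero.pos N)
  have hclass : ∀ i ∈ range D,
      ∑ e ∈ blockUnion D F i, w e = ∑ p : Fin N with p.val % D = i, ∑ e ∈ F p, w e := by
    intro i hi
    rw [blockUnion_eq_biUnion_filter hD (mem_range.1 hi), sum_biUnion]
    intro p hp p' hp' hne
    have hmod : p ≡ p' [MOD D] :=
      ((mem_filter_univ p).1 hp).trans ((mem_filter_univ p').1 hp').symm
    exact (disjoint_blockEdges (disjoint_cyclicBlock_of_modEq hD hd hmod hne)).mono (hF p) (hF p')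
  rw [sum_congr rfl hclass]
  exact sum_fiberwise_of_maps_to (fun p _ => mem_range.2 (Nat.mod_lt _ hDpos)) _

theorem CyclicDDM.nsmul_sum_le_sum_sum_blockUnion {R : Type*} [AddCommMonoid R] [PartialOrder R]
    [IsOrderedAddMonoid R] {w : Fin N × T → R} (hD : D ∣ N) (hd : d ≤ D)
    (hF : ∀ p, IsMaxWeightMatching w (blockEdges d E p) (F p)) {Ms : Finset (Fin N × T)}
    (hMs : CyclicDDM d E Ms) :
    d • ∑ e ∈ Ms, w e ≤ ∑ i ∈ range D, ∑ e ∈ blockUnion D F i, w e :=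
  calc d • ∑ e ∈ Ms, w e
      = ∑ p, ∑ e ∈ blockEdges d Ms p, w e :=
        (sum_sum_blockEdges (hd.trans (Nat.le_of_dvd (NeZero.pos N) hD)) Ms w).symm
    _ ≤ ∑ p, ∑ e ∈ F p, w e := sum_le_sum fun p _ =>
        (hF p).sum_le _ (blockEdges_mono hMs.1) (hMs.isMatching_blockEdges p)
    _ = ∑ i ∈ range D, ∑ e ∈ blockUnion D F i, w e :=
        (sum_sum_blockUnion hD hd (fun p => (hF p).subset) w).symm

end BlockUnion

theorem stmt11_general {T R : Type*} [DecidableEq T] [Field R] [LinearOrder R]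
    [IsStrictOrderedRing R] {N d : ℕ} [NeZero N] (hdvd : (2 * d - 1) ∣ N)
    {E : Finset (Fin N × T)} {w : Fin N × T → R} {F : Fin N → Finset (Fin N × T)}
    (hF : ∀ p, IsMaxWeightMatching w (blockEdges d E p) (F p)) :
    (∀ i < 2 * d - 1, CyclicDDM d E (blockUnion (2 * d - 1) F i)) ∧
    (∀ istar, (∀ i < 2 * d - 1, ∑ e ∈ blockUnion (2 * d - 1) F i, w e
        ≤ ∑ e ∈ blockUnion (2 * d - 1) F istar, w e) →
      ∀ Ms, CyclicDDM d E Ms →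
        (d : R) * ∑ e ∈ Ms, w e
          ≤ ∑ i ∈ range (2 * d - 1), ∑ e ∈ blockUnion (2 * d - 1) F i, w e ∧
        ∑ i ∈ range (2 * d - 1), ∑ e ∈ blockUnion (2 * d - 1) F i, w e
          ≤ (2 * (d : R) - 1) * ∑ e ∈ blockUnion (2 * d - 1) F istar, w e ∧
        ∑ e ∈ Ms, w e ≤ (2 - 1 / (d : R)) * ∑ e ∈ blockUnion (2 * d - 1) F istar, w e) := by
  have hspacing : 0 < 2 * d - 1 := Nat.pos_of_dvd_of_pos hdvd (NeZero.pos N)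
  have hd : (0 : R) < d := Nat.cast_pos.2 (by lia)
  have hcast : ((2 * d - 1 : ℕ) : R) = 2 * (d : R) - 1 := by
    rw [Nat.cast_pred (by lia), Nat.cast_mul, Nat.cast_ofNat]
  refine ⟨fun i hi => cyclicDDM_blockUnion hdvd le_rfl hi (fun p => (hF p).subset)
    fun p => (hF p).isMatching, fun istar hmax Ms hMs => ?_⟩
  have hlower := hMs.nsmul_sum_le_sum_sum_blockUnion hdvd (by lia) hF
  have hupper := sum_le_card_nsmul _ _ _ fun i hi => hmax i (mem_range.1 hi)
  rw [nsmul_eq_mul] at hlower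
  rw [card_range, nsmul_eq_mul, hcast] at hupper
  refine ⟨hlower, hupper, le_of_mul_le_mul_left ?_ hd⟩
  exact (hlower.trans hupper).trans_eq (by field_simp)

/-- The block construction: append `k` isolated dummy nodes (with `d−1 ≤ k ≤ 3d−3` and
`2d−1 ∣ n+k`), regard the `n+k` nodes of `S` cyclically, let `F p` be a maximum-weight
matching of the block `H_p`, and let `M i` be the union of the `F`'s over the block
starts congruent to `i` modulo `2d−1`. Then each `M i` is a feasible cyclic `d`-distance
matching, and the heaviest one, `M i*`, satisfies
`d·w(M*) ≤ Σ_i w(M i) ≤ (2d−1)·w(M i*)`, hence `w(M*) ≤ (2 − 1/d)·w(M i*)` for every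
cyclic `d`-distance matching `M*`. -/
theorem stmt11 {T : Type*} [DecidableEq T]
    (n k d : ℕ) (hd : 1 ≤ d) (hk1 : d - 1 ≤ k) (hk2 : k ≤ 3 * d - 3)
    (hdvd : (2 * d - 1) ∣ (n + k)) (hN : 0 < n + k)
    (E : Finset (Fin (n + k) × T)) (hdummy : ∀ e ∈ E, e.1.val < n)
    (w : Fin (n + k) × T → ℝ) (hw : ∀ e ∈ E, 0 ≤ w e)
    (F : Fin (n + k) → Finset (Fin (n + k) × T))
    (hF1 : ∀ p, F p ⊆ blockEdges d E p)
    (hF2 : ∀ p, IsMatching (F p))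
    (hF3 : ∀ p, ∀ F' ⊆ blockEdges d E p, IsMatching F' → ∑ e ∈ F', w e ≤ ∑ e ∈ F p, w e)
    (M : ℕ → Finset (Fin (n + k) × T))
    (hM : ∀ i, M i = (Finset.range ((n + k) / (2 * d - 1))).biUnion
      (fun j => F ⟨(i + j * (2 * d - 1)) % (n + k), Nat.mod_lt _ hN⟩)) :
    (∀ i < 2 * d - 1, CyclicDDM d E (M i)) ∧
    (∀ istar < 2 * d - 1, (∀ i < 2 * d - 1, ∑ e ∈ M i, w e ≤ ∑ e ∈ M istar, w e) →
      ∀ Ms, CyclicDDM d E Ms →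
        (d : ℝ) * ∑ e ∈ Ms, w e ≤ ∑ i ∈ Finset.range (2 * d - 1), ∑ e ∈ M i, w e ∧
        ∑ i ∈ Finset.range (2 * d - 1), ∑ e ∈ M i, w e
          ≤ (2 * (d : ℝ) - 1) * ∑ e ∈ M istar, w e ∧
        ∑ e ∈ Ms, w e ≤ (2 - 1 / (d : ℝ)) * ∑ e ∈ M istar, w e) := by
  have : NeZero (n + k) := ⟨hN.ne'⟩
  obtain rfl : M = blockUnion (2 * d - 1) F := funext hM
  obtain ⟨feasible, ratio⟩ := stmt11_general hdvd fun p => ⟨hF1 p, hF2 p, hF3 p⟩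
  exact ⟨feasible, fun istar _ => ratio istar⟩
end

section
/- If an instance of the d-distance matching problem is r-regular for some r ≥ 1, then G has a perfect d-distance matching. -/
open Finset

/-- `M` (a set of abstract edges with endpoint map `ep`, so parallel edges are allowed)
is a perfect `d`-distance matching: every node of `S = Fin n` is incident to exactly one
edge of `M`, and two distinct edges of `M` at the same `T`-node have their `S`-nodes at
distance at least `d`. -/
def PerfectDDMm {n : ℕ} {T ι : Type*} (d : ℕ) (ep : ι → Fin n × T) (M : Finset ι) : Prop :=
  (∀ s : Fin n, ∃! e, e ∈ M ∧ (ep e).1 = s) ∧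
  (∀ e ∈ M, ∀ f ∈ M, (ep e).2 = (ep f).2 → e ≠ f →
    d ≤ Nat.dist (ep e).1.val (ep f).1.val)

/-!
By Hall's theorem the first `d` nodes of `S` can be matched to distinct nodes of `T`. Sliding a
window of `d` consecutive nodes one step to the right loses the edges from `t` to `s_i` and gains
those from `t` to `s_{i+d}`; as the number of edges at `t` does not drop, `t` is adjacent to
`s_{i+d}` whenever it is adjacent to `s_i`. Hence the matching of the first window repeats with
period `d`, and nodes sharing a partner are congruent modulo `d`.
-/

theorem le_dist_of_modEq {a b d : ℕ} (h : a ≡ b [MOD d]) (hab : a ≠ b) : d ≤ Nat.dist a b := by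
  rcases hab.lt_or_gt with hlt | hgt
  · have := h.add_le_of_lt hlt
    rw [Nat.dist_eq_sub_of_le hlt.le]
    omega
  · have := h.symm.add_le_of_lt hgt
    rw [Nat.dist_eq_sub_of_le_right hgt.le]
    omega

section DoubleCounting

variable {α β ι : Type*} [DecidableEq α] [DecidableEq β] {r : ℕ} {a : ι → α} {b : ι → β}
  {X : Finset α} {E : Finset ι}

theorem card_le_card_image_of_card_fiber (hr : 0 < r) (ha : ∀ x ∈ X, r ≤ #{e ∈ E | a e = x})
    (hb : ∀ y, #{e ∈ E | b e = y} ≤ r) : #X ≤ #({e ∈ E | a e ∈ X}.image b) := by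
  have mul_card_le : r * #X ≤ #{e ∈ E | a e ∈ X} := by
    refine mul_card_image_le_card_of_maps_to (fun e he ↦ (mem_filter.1 he).2) r fun x hx ↦ ?_
    refine (ha x hx).trans (card_le_card fun e he ↦ ?_)
    obtain ⟨heE, rfl⟩ := mem_filter.1 he
    exact mem_filter.2 ⟨mem_filter.2 ⟨heE, hx⟩, rfl⟩
  have card_le_mul : #{e ∈ E | a e ∈ X} ≤ r * #({e ∈ E | a e ∈ X}.image b) :=
    card_le_mul_card_image _ r fun y _ ↦
      (card_le_card (filter_subset_filter _ (filter_subset _ _))).trans (hb y)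
  exact Nat.le_of_mul_le_mul_left (mul_card_le.trans card_le_mul) hr

theorem exists_injective_of_card_fiber (hr : 0 < r) (ha : ∀ x ∈ X, r ≤ #{e ∈ E | a e = x})
    (hb : ∀ y, #{e ∈ E | b e = y} ≤ r) :
    ∃ f : X → β, Function.Injective f ∧ ∀ x : X, ∃ e ∈ E, a e = x ∧ b e = f x := by
  let N (x : X) : Finset β := {e ∈ E | a e = x}.image b
  have hall (A : Finset X) : #A ≤ #(A.biUnion N) := by
    let B : Finset α := A.map (.subtype _)
    have image_subset : {e ∈ E | a e ∈ B}.image b ⊆ A.biUnion N := by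
      intro y hy
      obtain ⟨e, he, rfl⟩ := mem_image.1 hy
      obtain ⟨heE, heB⟩ := mem_filter.1 he
      obtain ⟨x, hxA, hx⟩ := mem_map.1 heB
      exact mem_biUnion.2 ⟨x, hxA, mem_image_of_mem b (mem_filter.2 ⟨heE, hx.symm⟩)⟩
    calc #A = #B := (card_map _).symm
      _ ≤ #({e ∈ E | a e ∈ B}.image b) :=
        card_le_card_image_of_card_fiber hr (fun x hx ↦ ha x (property_of_mem_map_subtype A hx)) hb
      _ ≤ #(A.biUnion N) := card_le_card image_subset
  obtain ⟨f, hinj, hf⟩ := (all_card_le_biUnion_card_iff_exists_injective N).1 hall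
  refine ⟨f, hinj, fun x ↦ ?_⟩
  obtain ⟨e, he, hef⟩ := mem_image.1 (hf x)
  obtain ⟨heE, hex⟩ := mem_filter.1 he
  exact ⟨e, heE, hex, hef⟩

end DoubleCounting

section DistanceMatching

variable {n : ℕ} {T ι : Type*} {d : ℕ} {ep : ι → Fin n × T}

/-- Adjacency in the bipartite multigraph `ep`. The `S`-node is given by its index in `ℕ`, so that
it can be shifted; no edge exists at an index `i ≥ n`. -/
def HasEdge (ep : ι → Fin n × T) (i : ℕ) (t : T) : Prop :=
  ∃ e, (ep e).1.val = i ∧ (ep e).2 = t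

/-- The number of edges, counted with multiplicity, between `t` and the window of the `d`
consecutive `S`-nodes starting at index `i`, cut off at `n`. -/
def windowDegree [DecidableEq T] [Fintype ι] (d : ℕ) (ep : ι → Fin n × T) (t : T) (i : ℕ) : ℕ :=
  #{e | (ep e).2 = t ∧ i ≤ (ep e).1.val ∧ (ep e).1.val < i + d}

theorem exists_perfectDDMm_of_forall_hasEdge {f : Fin n → T} (hf : ∀ s : Fin n, HasEdge ep s (f s))
    (hdist : ∀ s s' : Fin n, f s = f s' → s ≠ s' → d ≤ Nat.dist s s') :
    ∃ M : Finset ι, PerfectDDMm d ep M := by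
  classical
  choose edge edge_val edge_snd using hf
  have edge_fst (s : Fin n) : (ep (edge s)).1 = s := Fin.ext (edge_val s)
  refine ⟨univ.image edge, fun s ↦ ⟨edge s, ⟨mem_image_of_mem _ (mem_univ s), edge_fst s⟩, ?_⟩, ?_⟩
  · rintro e ⟨he, rfl⟩
    obtain ⟨s', -, rfl⟩ := mem_image.1 he
    rw [edge_fst]
  · intro e he e' he' heq hne
    obtain ⟨s, -, rfl⟩ := mem_image.1 he
    obtain ⟨s', -, rfl⟩ := mem_image.1 he'
    rw [edge_snd, edge_snd] at heq
    rw [edge_fst, edge_fst]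
    exact hdist s s' heq (ne_of_apply_ne edge hne)

variable [DecidableEq T] [Fintype ι]

theorem HasEdge.add_of_windowDegree_le {t : T} {i : ℕ}
    (hle : windowDegree d ep t i ≤ windowDegree d ep t (i + 1)) (h : HasEdge ep i t) :
    HasEdge ep (i + d) t := by
  obtain ⟨e, hei, het⟩ := h
  by_contra hnot
  have no_edge (x : ι) (hx : (ep x).2 = t) : (ep x).1.val ≠ i + d := fun hxi ↦ hnot ⟨x, hxi, hx⟩
  have d_ne_zero : d ≠ 0 := by
    have := no_edge e het
    omega
  refine hle.not_gt (card_lt_card ((ssubset_iff_of_subset fun x hx ↦ ?_).2 ⟨e, ?_, ?_⟩))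
  · simp only [mem_filter_univ] at hx ⊢
    have := no_edge x hx.1
    exact ⟨hx.1, by omega, by omega⟩
  · simp only [mem_filter_univ]
    exact ⟨het, by omega, by omega⟩
  · simp only [mem_filter_univ]
    omega

theorem HasEdge.add_mul_of_windowDegree_le {t : T} {i k : ℕ}
    (hle : ∀ j, j + d < n → windowDegree d ep t j ≤ windowDegree d ep t (j + 1))
    (hn : i + d * k < n) (h : HasEdge ep i t) : HasEdge ep (i + d * k) t := by
  induction k with
  | zero => exact h
  | succ k ih =>
    rw [Nat.mul_succ, ← Nat.add_assoc] at hn ⊢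
    exact (ih (by omega)).add_of_windowDegree_le (hle _ hn)

theorem exists_injective_hasEdge_of_windowDegree_zero_le {r : ℕ} (hr : 0 < r)
    (hdeg : ∀ s : Fin n, s.val < d → r ≤ #{e | (ep e).1 = s})
    (hwin : ∀ t, windowDegree d ep t 0 ≤ r) :
    ∃ f : ({s | s.val < d} : Finset (Fin n)) → T, Function.Injective f ∧
      ∀ s, HasEdge ep s.1 (f s) := by
  let E : Finset ι := {e | (ep e).1.val < d}
  have le_card_fiber_fst : ∀ s ∈ ({s | s.val < d} : Finset (Fin n)),
      r ≤ #{e ∈ E | (ep e).1 = s} := by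
    intro s hs
    have hsd : s.val < d := by simpa using hs
    refine (hdeg s hsd).trans (card_le_card fun e he ↦ ?_)
    obtain rfl : (ep e).1 = s := by simpa using he
    simpa [E] using hsd
  have card_fiber_snd_le (t : T) : #{e ∈ E | (ep e).2 = t} ≤ r := by
    refine (card_le_card fun e he ↦ ?_).trans (hwin t)
    simpa [E, and_comm] using he
  obtain ⟨f, hinj, hf⟩ := exists_injective_of_card_fiber hr le_card_fiber_fst card_fiber_snd_le
  refine ⟨f, hinj, fun s ↦ ?_⟩
  obtain ⟨e, -, hes, het⟩ := hf s
  exact ⟨e, congrArg Fin.val hes, het⟩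

theorem stmt18_general {r : ℕ} (hd : 0 < d) (hr : 0 < r)
    (hdeg : ∀ s : Fin n, s.val < d → r ≤ #{e | (ep e).1 = s})
    (hwin : ∀ t, windowDegree d ep t 0 ≤ r)
    (hmono : ∀ t i, i + d < n → windowDegree d ep t i ≤ windowDegree d ep t (i + 1)) :
    ∃ M : Finset ι, PerfectDDMm d ep M := by
  obtain ⟨f, hinj, hf⟩ := exists_injective_hasEdge_of_windowDegree_zero_le hr hdeg hwin
  let residue (s : Fin n) : ({s | s.val < d} : Finset (Fin n)) :=
    ⟨⟨s % d, (Nat.mod_le s d).trans_lt s.2⟩, by simpa using Nat.mod_lt s hd⟩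
  refine exists_perfectDDMm_of_forall_hasEdge (f := fun s ↦ f (residue s)) (fun s ↦ ?_)
    fun s s' hfs hne ↦ ?_
  · have hs : s % d + d * (s / d) = (s : ℕ) := Nat.mod_add_div s d
    simpa only [residue, hs] using
      (hf (residue s)).add_mul_of_windowDegree_le (hmono _) (hs.trans_lt s.2)
  · have hmod : s ≡ s' [MOD d] := congrArg (Fin.val ∘ Subtype.val) (hinj hfs)
    exact le_dist_of_modEq hmod (Fin.val_ne_of_ne hne)

end DistanceMatching

/-- If an instance of the `d`-distance matching problem is `r`-regular — every `s ∈ S`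
has degree `r`, and for every `t ∈ T` and every window `R_d(s_i)` (`1 ≤ i ≤ n − d + 1`)
the number of edges between `t` and `R_d(s_i)` is `r` — then a perfect `d`-distance
matching exists. -/
theorem stmt18 {n : ℕ} {T ι : Type*} [DecidableEq T] [DecidableEq ι] [Fintype ι]
    (d r : ℕ) (hd : 1 ≤ d) (hdn : d ≤ n) (hr : 1 ≤ r)
    (ep : ι → Fin n × T)
    (hdeg : ∀ s : Fin n, (Finset.univ.filter (fun e => (ep e).1 = s)).card = r)
    (hreg : ∀ t : T, ∀ i : ℕ, i + d ≤ n →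
      (Finset.univ.filter
        (fun e => (ep e).2 = t ∧ i ≤ (ep e).1.val ∧ (ep e).1.val < i + d)).card = r) :
    ∃ M : Finset ι, PerfectDDMm d ep M := by
  exact stmt18_general hd hr (fun s _ ↦ (hdeg s).ge) (fun t ↦ (hreg t 0 (by omega)).le)
    fun t i hi ↦ ((hreg t i hi.le).trans (hreg t (i + 1) (by omega)).symm).le
end

section
/- If an instance of the d-distance matching problem is r-regular for some r ≥ 1, then the edge set E partitions into r perfect d-distance matchings. -/
open Finset

/-!
The window condition makes the number of edges between `s` and `t` depend only on `t` and on the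
residue of `s` modulo `d`: the windows starting at `i` and `i + 1` differ only in the nodes `i` and
`i + d`. On the first `d` nodes these numbers form a matrix with all row and column sums `r`, which
by Hall's theorem is a sum of `r` permutation matrices. Extending each permutation periodically to
all of `S` gives `r` perfect `d`-distance matchings with the right number of edges between any two
nodes, and it remains to distribute parallel edges among them.
-/

section IntegerBirkhoff

variable {A B : Type*} [Fintype A] [Fintype B]

theorem exists_injective_forall_ne_zero_of_sum_eq_of_sum_le {N : A → B → ℕ} {r : ℕ} (hr : 0 < r)
    (hrow : ∀ a, ∑ b, N a b = r) (hcol : ∀ b, ∑ a, N a b ≤ r) :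
    ∃ f : A → B, f.Injective ∧ ∀ a, N a (f a) ≠ 0 := by
  classical
  rw [← Fintype.all_card_le_filter_rel_iff_exists_injective (fun a b => N a b ≠ 0)]
  intro X
  set Y : Finset B := {b | ∃ a ∈ X, N a b ≠ 0} with hY
  have row_supported : ∀ a ∈ X, ∑ b ∈ Y, N a b = r := fun a ha => by
    rw [← hrow a]
    refine sum_subset (subset_univ Y) fun b _ hb => ?_
    by_contra hab
    exact hb (by simpa [hY] using ⟨a, ha, hab⟩)
  refine Nat.le_of_mul_le_mul_right ?_ hr
  calc #X * r = ∑ a ∈ X, ∑ b ∈ Y, N a b := by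
        rw [sum_congr rfl row_supported, sum_const, smul_eq_mul]
    _ = ∑ b ∈ Y, ∑ a ∈ X, N a b := sum_comm
    _ ≤ ∑ b ∈ Y, ∑ a, N a b := sum_le_sum fun b _ => sum_le_sum_of_subset (subset_univ X)
    _ ≤ #Y * r := sum_le_card_nsmul Y _ r fun b _ => hcol b

theorem card_eq_card_of_sum_eq_of_sum_eq {N : A → B → ℕ} {r : ℕ} (hr : 0 < r)
    (hrow : ∀ a, ∑ b, N a b = r) (hcol : ∀ b, ∑ a, N a b = r) :
    Fintype.card A = Fintype.card B := by
  refine Nat.eq_of_mul_eq_mul_right hr ?_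
  calc Fintype.card A * r = ∑ a, ∑ b, N a b := by simp [hrow]
    _ = ∑ b, ∑ a, N a b := sum_comm
    _ = Fintype.card B * r := by simp [hcol]

theorem exists_equiv_forall_ne_zero_of_sum_eq {N : A → B → ℕ} {r : ℕ} (hr : 0 < r)
    (hrow : ∀ a, ∑ b, N a b = r) (hcol : ∀ b, ∑ a, N a b = r) :
    ∃ σ : A ≃ B, ∀ a, N a (σ a) ≠ 0 := by
  obtain ⟨f, hf, hN⟩ :=
    exists_injective_forall_ne_zero_of_sum_eq_of_sum_le hr hrow fun b => (hcol b).le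
  have hbij : f.Bijective := (Fintype.bijective_iff_injective_and_card f).2
    ⟨hf, card_eq_card_of_sum_eq_of_sum_eq hr hrow hcol⟩
  exact ⟨Equiv.ofBijective f hbij, hN⟩

theorem exists_equiv_family_card_eq_of_sum_eq [DecidableEq B] {r : ℕ} {N : A → B → ℕ}
    (hrow : ∀ a, ∑ b, N a b = r) (hcol : ∀ b, ∑ a, N a b = r) :
    ∃ σ : Fin r → A ≃ B, ∀ a b, #{c | σ c a = b} = N a b := by
  induction r generalizing N with
  | zero =>
    have hN : ∀ a b, N a b = 0 := fun a b => sum_eq_zero_iff.1 (hrow a) b (mem_univ b)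
    exact ⟨Fin.elim0, fun a b => by simp [hN]⟩
  | succ r ih =>
    obtain ⟨τ, hτ⟩ := exists_equiv_forall_ne_zero_of_sum_eq r.succ_pos hrow hcol
    obtain ⟨N', hN'⟩ : ∃ N' : A → B → ℕ, ∀ a b, N a b = (if τ a = b then 1 else 0) + N' a b := by
      refine ⟨fun a b => N a b - if τ a = b then 1 else 0, fun a b => ?_⟩
      have := hτ a
      grind
    have hrow' : ∀ a, ∑ b, N' a b = r := fun a => by
      have := hrow a
      simp only [hN', sum_add_distrib, sum_ite_eq, mem_univ, if_true] at this
      omega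
    have hcol' : ∀ b, ∑ a, N' a b = r := fun b => by
      have hone : ∑ a, (if τ a = b then 1 else 0) = 1 :=
        (τ.sum_comp fun b' => if b' = b then 1 else 0).trans (by simp)
      have := hcol b
      simp only [hN', sum_add_distrib, hone] at this
      omega
    obtain ⟨σ, hσ⟩ := ih hrow' hcol'
    refine ⟨Fin.cons τ σ, fun a b => ?_⟩
    simp only [Fin.card_filter_univ_succ', Fin.cons_zero, Fin.cons_succ, hσ, hN']

end IntegerBirkhoff

section Fibers

theorem exists_equiv_apply_eq_of_card_fiber_eq {α β γ : Type*} [Fintype α] [Fintype β]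
    [DecidableEq γ] {f : α → γ} {g : β → γ} (h : ∀ c, #{a | f a = c} = #{b | g b = c}) :
    ∃ e : α ≃ β, ∀ a, g (e a) = f a := by
  have hcard : ∀ c, Fintype.card {a // f a = c} = Fintype.card {b // g b = c} := fun c => by
    simpa only [Fintype.card_subtype] using h c
  exact ⟨_, Equiv.ofFiberEquiv_map fun c => Fintype.equivOfCardEq (hcard c)⟩

variable {ι S T C : Type*} [Fintype ι]

theorem card_filter_prodMk_apply_eq [Fintype S] [Fintype C] [DecidableEq S] [DecidableEq T]
    (x : C → S → T) (s : S) (t : T) :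
    #{p : S × C | (p.1, x p.2 p.1) = (s, t)} = #{c | x c s = t} := by
  refine card_bij' (fun p _ => p.2) (fun c _ => (s, c)) ?_ ?_ ?_ ?_ <;> aesop

theorem exists_equiv_prod_of_card_fiber_eq [Finite S] [Fintype C] [DecidableEq S] [DecidableEq T]
    {ep : ι → S × T} {x : C → S → T} (h : ∀ s t, #{e | ep e = (s, t)} = #{c | x c s = t}) :
    ∃ Φ : ι ≃ S × C, ∀ e, ((Φ e).1, x (Φ e).2 (Φ e).1) = ep e := by
  have := Fintype.ofFinite S
  exact exists_equiv_apply_eq_of_card_fiber_eq (g := fun p : S × C => (p.1, x p.2 p.1))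
    fun ⟨s, t⟩ => (h s t).trans (card_filter_prodMk_apply_eq x s t).symm

end Fibers

theorem eq_apply_mod_of_sum_Ico_eq {M : Type*} [AddCancelCommMonoid M] {w : ℕ → M} {m : M}
    {d n : ℕ} (h : ∀ i, i + d ≤ n → ∑ k ∈ Ico i (i + d), w k = m) {k : ℕ} (hk : k < n) :
    w k = w (k % d) := by
  have shift : ∀ i, i + d < n → w (i + d) = w i := fun i hi => by
    refine add_left_cancel (a := m) ?_
    calc m + w (i + d) = ∑ k ∈ Ico i (i + d + 1), w k := by
          rw [sum_Ico_succ_top (by omega), h i hi.le]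
      _ = m + w i := by
          rw [sum_eq_sum_Ico_succ_bot (by omega), add_right_comm, h (i + 1) (by omega), add_comm]
  induction k using Nat.strong_induction_on with
  | _ k ih =>
    rcases lt_or_ge k d with hkd | hdk
    · rw [Nat.mod_eq_of_lt hkd]
    · obtain ⟨i, rfl⟩ := Nat.exists_eq_add_of_le' hdk
      rcases d.eq_zero_or_pos with rfl | hd
      · rw [Nat.mod_zero]
      · rw [shift i hk, Nat.add_mod_right, ih i (by omega) (by omega)]

theorem le_dist_of_modEq_of_ne {d a b : ℕ} (h : a ≡ b [MOD d]) (hne : a ≠ b) :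
    d ≤ Nat.dist a b := by
  rcases hne.lt_or_gt with hab | hba
  · rw [Nat.dist_eq_sub_of_le hab.le]
    have := h.add_le_of_lt hab
    omega
  · rw [Nat.dist_eq_sub_of_le_right hba.le]
    have := h.symm.add_le_of_lt hba
    omega

section DistanceMatching

variable {n d r : ℕ} {T ι : Type*} [Fintype ι] {ep : ι → Fin n × T}

theorem perfectDDMm_filter_of_equiv {C : Type*} [DecidableEq C] {x : C → Fin n → T}
    (hx : ∀ c (s s' : Fin n), x c s = x c s' → s ≡ s' [MOD d]) (Φ : ι ≃ Fin n × C)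
    (hΦ : ∀ e, ((Φ e).1, x (Φ e).2 (Φ e).1) = ep e) (c : C) :
    PerfectDDMm d ep {e | (Φ e).2 = c} := by
  simp only [PerfectDDMm, mem_filter_univ, ← hΦ]
  refine ⟨fun s => ⟨Φ.symm (s, c), by simp, ?_⟩, ?_⟩
  · rintro e ⟨rfl, rfl⟩
    simp
  · rintro e rfl f hf hT hne
    rw [hf] at hT
    refine le_dist_of_modEq_of_ne (hx _ _ _ hT) fun hS => hne (Φ.injective ?_)
    exact Prod.ext (Fin.ext hS) hf.symm

variable [DecidableEq T]

/-- The number of parallel edges between the node of `S` with index `k` and the node `t`. The index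
is a natural number, and the count is `0` when `n ≤ k`. -/
def edgeMult (ep : ι → Fin n × T) (k : ℕ) (t : T) : ℕ :=
  #{e | ((ep e).1 : ℕ) = k ∧ (ep e).2 = t}

theorem edgeMult_val (s : Fin n) (t : T) : edgeMult ep s t = #{e | ep e = (s, t)} := by
  simp only [edgeMult, Prod.ext_iff, Fin.ext_iff]

theorem sum_edgeMult_right [Fintype T] (s : Fin n) :
    ∑ t, edgeMult ep s t = #{e | (ep e).1 = s} := by
  rw [card_eq_sum_card_fiberwise (f := fun e => (ep e).2) (t := univ) (by simp)]
  simp only [edgeMult, filter_filter, Fin.ext_iff]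

theorem sum_edgeMult_Ico (i j : ℕ) (t : T) :
    ∑ k ∈ Ico i j, edgeMult ep k t =
      #{e | (ep e).2 = t ∧ i ≤ (ep e).1.val ∧ (ep e).1.val < j} := by
  rw [card_eq_sum_card_fiberwise (f := fun e => ((ep e).1 : ℕ)) (t := Ico i j)
    (fun e he => by simpa using (mem_filter.1 he).2.2)]
  refine sum_congr rfl fun k hk => ?_
  rw [edgeMult, filter_filter]
  congr 1 with e
  grind

theorem finite_of_forall_exists_edgeMult_ne_zero (h : ∀ t, ∃ k, edgeMult ep k t ≠ 0) : Finite T :=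
  Finite.of_surjective (fun e => (ep e).2) fun t => by
    obtain ⟨k, hk⟩ := h t
    obtain ⟨e, he⟩ := card_ne_zero.1 hk
    exact ⟨e, (mem_filter.1 he).2.2⟩

theorem exists_equiv_family_card_eq_edgeMult [NeZero d] (hdn : d ≤ n) [Fintype T]
    (hrow : ∀ s : Fin n, ∑ t, edgeMult ep s t = r)
    (hwindow : ∀ t i, i + d ≤ n → ∑ k ∈ Ico i (i + d), edgeMult ep k t = r) :
    ∃ σ : Fin r → Fin d ≃ T, ∀ (s : Fin n) t, #{c | σ c (Fin.ofNat d s) = t} = edgeMult ep s t := by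
  have hcol : ∀ t, ∑ j : Fin d, edgeMult ep j t = r := fun t => by
    rw [Fin.sum_univ_eq_sum_range (edgeMult ep · t), range_eq_Ico]
    simpa using hwindow t 0 (by simpa using hdn)
  obtain ⟨σ, hσ⟩ := exists_equiv_family_card_eq_of_sum_eq
    (N := fun (j : Fin d) t => edgeMult ep j t) (fun j => hrow (j.castLE hdn)) hcol
  refine ⟨σ, fun s t => ?_⟩
  rw [hσ, Fin.val_ofNat, ← eq_apply_mod_of_sum_Ico_eq (hwindow t) s.isLt]

end DistanceMatching

/-- If an instance of the `d`-distance matching problem is `r`-regular — every `s ∈ S`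
has degree `r`, and for every `t ∈ T` and every window `R_d(s_i)` (`1 ≤ i ≤ n − d + 1`)
the number of edges between `t` and `R_d(s_i)` is `r` — then the edge set partitions
into `r` perfect `d`-distance matchings. -/
theorem stmt19 {n : ℕ} {T ι : Type*} [DecidableEq T] [DecidableEq ι] [Fintype ι]
    (d r : ℕ) (hd : 1 ≤ d) (hdn : d ≤ n) (hr : 1 ≤ r)
    (ep : ι → Fin n × T)
    (hdeg : ∀ s : Fin n, (Finset.univ.filter (fun e => (ep e).1 = s)).card = r)
    (hreg : ∀ t : T, ∀ i : ℕ, i + d ≤ n →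
      (Finset.univ.filter
        (fun e => (ep e).2 = t ∧ i ≤ (ep e).1.val ∧ (ep e).1.val < i + d)).card = r) :
    ∃ P : Fin r → Finset ι,
      (∀ c, PerfectDDMm d ep (P c)) ∧ (∀ e : ι, ∃! c, e ∈ P c) := by
  have hwindow : ∀ t i, i + d ≤ n → ∑ k ∈ Ico i (i + d), edgeMult ep k t = r := fun t i hi =>
    (sum_edgeMult_Ico i (i + d) t).trans (hreg t i hi)
  have : NeZero d := ⟨by omega⟩
  have : Finite T := finite_of_forall_exists_edgeMult_ne_zero fun t => by
    have := exists_ne_zero_of_sum_ne_zero ((hwindow t 0 (by omega)).trans_ne (by omega))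
    exact this.imp fun _ => And.right
  have := Fintype.ofFinite T
  obtain ⟨σ, hσ⟩ := exists_equiv_family_card_eq_edgeMult hdn
    (fun s => (sum_edgeMult_right s).trans (hdeg s)) hwindow
  obtain ⟨Φ, hΦ⟩ := exists_equiv_prod_of_card_fiber_eq (ep := ep)
    (x := fun c (s : Fin n) => σ c (Fin.ofNat d s))
    fun s t => (edgeMult_val s t).symm.trans (hσ s t).symm
  have same_residue : ∀ c (s s' : Fin n), σ c (Fin.ofNat d s) = σ c (Fin.ofNat d s') →
      s ≡ s' [MOD d] := fun c s s' h => congrArg Fin.val ((σ c).injective h)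
  exact ⟨fun c => {e | (Φ e).2 = c}, perfectDDMm_filter_of_equiv same_residue Φ hΦ,
    fun e => by simp⟩
end
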